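/- arXiv:2004.11049 — 10 statements merged into one kernel-verified Lean document; each statement's English description precedes it below -/
import Mathlib

section
/- For every j ∈ ℕ and every x ∈ (0, π/2), the function e_j satisfies the eigenvalue equation of the operator governing linearized perturbations of the AdS solution: the derivative of x ↦ tan²(x)·e_j'(x) equals −ω_j²·tan²(x)·e_j(x); equivalently, −(1/tan²(x))·d/dx(tan²(x)·d/dx e_j(x)) = ω_j²·e_j(x). -/
open Real MeasureTheory

/-- The AdS linearized eigenvalue `ω_j = 2j + 3`. -/
noncomputable def ω (j : ℕ) : ℝ := 2 * j + 3

/-- The AdS linearized eigenfunction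
`e_j(x) = (2/√π)·(ω_j² − 1)^(−1/2)·(ω_j·sin(ω_j x)/tan x − cos(ω_j x))`. -/
noncomputable def e (j : ℕ) (x : ℝ) : ℝ :=
  (2 / Real.sqrt Real.pi) * (Real.sqrt (ω j ^ 2 - 1))⁻¹ *
    (ω j * Real.sin (ω j * x) / Real.tan x - Real.cos (ω j * x))

/-- The derivative of the AdS linearized eigenfunction,
`e_j'(x) = (2/√π)·ω_j·(ω_j² − 1)^(−1/2)·(ω_j·cos(ω_j x)/tan x − sin(ω_j x)/tan² x)`. -/
noncomputable def e' (j : ℕ) (x : ℝ) : ℝ :=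
  (2 / Real.sqrt Real.pi) * ω j * (Real.sqrt (ω j ^ 2 - 1))⁻¹ *
    (ω j * Real.cos (ω j * x) / Real.tan x - Real.sin (ω j * x) / Real.tan x ^ 2)

/-!
With `ψ = tan · u`, the equation `d/dx (tan² u') = -κ tan² u` becomes `-ψ'' + 2 sec² ψ = κ ψ` away
from the zeros of `tan`. Since `(d/dx + tan) (-d/dx + tan) = -d²/dx² + 2 sec² - 1` while
`(-d/dx + tan) (d/dx + tan) = -d²/dx² - 1`, the operator `d/dx + tan` carries every solution of
the free equation `f'' = -κ f` to such a `ψ`, which gives the solution `u = f + f' / tan`. The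
eigenfunction `e j` arises in this way from a multiple of `cos (ω j x)`. Explicitly,
`tan² u' = f'' tan - f'`, and differentiating once more gives the equation.
-/

open scoped Topology

/-- The Darboux transform `f + f' / tan` of a function `f` with derivative `f'`, taking solutions
of `f'' = -κ f` to solutions `u` of `d/dx (tan² u') = -κ tan² u`. The derivative is passed as a
separate argument. -/
noncomputable def darboux (f f' : ℝ → ℝ) (x : ℝ) : ℝ :=
  f x + f' x / tan x

/-- The solution of `f'' = -(ω j)² f` whose Darboux transform is the eigenfunction `e j`. -/
noncomputable def cosMode (j : ℕ) (x : ℝ) : ℝ :=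
  -(2 / √π * (√(ω j ^ 2 - 1))⁻¹ * cos (ω j * x))

/-- The derivative of `cosMode j`. -/
noncomputable def cosMode' (j : ℕ) (x : ℝ) : ℝ :=
  2 / √π * (√(ω j ^ 2 - 1))⁻¹ * (ω j * sin (ω j * x))

-- Division by zero makes `tan` vanish at the zeros of `cos`.
theorem cos_ne_zero_of_tan_ne_zero {x : ℝ} (htan : tan x ≠ 0) : cos x ≠ 0 := by
  contrapose! htan
  rw [tan_eq_sin_div_cos, htan, div_zero]

theorem hasDerivAt_tan_one_add_tan_sq {x : ℝ} (hcos : cos x ≠ 0) :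
    HasDerivAt tan (1 + tan x ^ 2) x := by
  simpa only [← inv_one_add_tan_sq hcos, one_div, inv_inv] using hasDerivAt_tan hcos

theorem eventually_tan_ne_zero {x : ℝ} (htan : tan x ≠ 0) : ∀ᶠ y in 𝓝 x, tan y ≠ 0 :=
  (continuousAt_tan.mpr (cos_ne_zero_of_tan_ne_zero htan)).eventually_ne htan

theorem hasDerivAt_darboux {f f' : ℝ → ℝ} {f'' x : ℝ} (htan : tan x ≠ 0)
    (hf : HasDerivAt f (f' x) x) (hf' : HasDerivAt f' f'' x) :
    HasDerivAt (darboux f f') (f'' / tan x - f' x / tan x ^ 2) x := by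
  have htan' := hasDerivAt_tan_one_add_tan_sq (cos_ne_zero_of_tan_ne_zero htan)
  refine (hf.add (hf'.div htan' htan)).congr_deriv ?_
  field_simp
  ring

theorem ads_eigenfunction_eigenvalue_equation_general {f f' u' : ℝ → ℝ} {κ x : ℝ}
    (htan : tan x ≠ 0)
    (hf : ∀ᶠ y in 𝓝 x, HasDerivAt f (f' y) y)
    (hf' : ∀ᶠ y in 𝓝 x, HasDerivAt f' (-(κ * f y)) y)
    (hu : ∀ᶠ y in 𝓝 x, HasDerivAt (darboux f f') (u' y) y) :
    HasDerivAt (fun y => tan y ^ 2 * u' y) (-(κ * tan x ^ 2 * darboux f f' x)) x := by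
  have flux_eq : (fun y => tan y ^ 2 * u' y) =ᶠ[𝓝 x] fun y => -(κ * f y) * tan y - f' y := by
    filter_upwards [eventually_tan_ne_zero htan, hf, hf', hu] with y hty hfy hfy' huy
    rw [huy.unique (hasDerivAt_darboux hty hfy hfy')]
    field_simp
  have htan' := hasDerivAt_tan_one_add_tan_sq (cos_ne_zero_of_tan_ne_zero htan)
  have flux_deriv :=
    ((hf.self_of_nhds.const_mul κ).neg.mul htan').sub hf'.self_of_nhds
  refine (flux_deriv.congr_of_eventuallyEq flux_eq).congr_deriv ?_
  simp only [darboux, Pi.neg_apply]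
  field_simp
  ring

theorem hasDerivAt_cosMode (j : ℕ) (x : ℝ) : HasDerivAt (cosMode j) (cosMode' j x) x := by
  have hcos := ((hasDerivAt_id' x).const_mul (ω j)).cos
  refine (hcos.const_mul (2 / √π * (√(ω j ^ 2 - 1))⁻¹)).neg.congr_deriv ?_
  simp only [cosMode']
  ring

theorem hasDerivAt_cosMode' (j : ℕ) (x : ℝ) :
    HasDerivAt (cosMode' j) (-(ω j ^ 2 * cosMode j x)) x := by
  have hsin := ((hasDerivAt_id' x).const_mul (ω j)).sin
  refine ((hsin.const_mul (ω j)).const_mul (2 / √π * (√(ω j ^ 2 - 1))⁻¹)).congr_deriv ?_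
  simp only [cosMode]
  ring

theorem e_eq_darboux_cosMode (j : ℕ) : e j = darboux (cosMode j) (cosMode' j) := by
  funext x
  simp only [e, darboux, cosMode, cosMode']
  ring

theorem hasDerivAt_darboux_cosMode (j : ℕ) {x : ℝ} (htan : tan x ≠ 0) :
    HasDerivAt (darboux (cosMode j) (cosMode' j)) (e' j x) x := by
  refine (hasDerivAt_darboux htan (hasDerivAt_cosMode j x)
    (hasDerivAt_cosMode' j x)).congr_deriv ?_
  simp only [e', cosMode, cosMode']
  ring

/-- For every `j ∈ ℕ` and `x ∈ (0, π/2)`, the function `e_j` satisfies the eigenvalue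
equation of the AdS linearized operator: the derivative of `x ↦ tan²(x)·e_j'(x)` equals
`−ω_j²·tan²(x)·e_j(x)`. -/
theorem ads_eigenfunction_eigenvalue_equation (j : ℕ) (x : ℝ)
    (hx : x ∈ Set.Ioo 0 (Real.pi / 2)) :
    HasDerivAt (fun y => Real.tan y ^ 2 * e' j y)
      (-(ω j ^ 2 * Real.tan x ^ 2 * e j x)) x := by
  have htan : tan x ≠ 0 := (tan_pos_of_pos_of_lt_pi_div_two hx.1 hx.2).ne'
  rw [e_eq_darboux_cosMode]
  exact ads_eigenfunction_eigenvalue_equation_general htan (.of_forall (hasDerivAt_cosMode j))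
    (.of_forall (hasDerivAt_cosMode' j))
    ((eventually_tan_ne_zero htan).mono fun _ => hasDerivAt_darboux_cosMode j)
end

section
/- For all i, j ∈ ℕ, ∫₀^{π/2} e_i(x)·e_j(x)·tan²(x) dx = δ_{ij}, i.e. the family {e_j} is orthonormal with respect to the weighted inner product (f|g) = ∫₀^{π/2} f(x)g(x)tan²(x) dx. -/
open Real MeasureTheory

/-!
Expanding the product of two modes and using `tan² = sec² - 1`, the weighted integrand becomes
`αβ sin(αx) sin(βx) - cos(αx) cos(βx)` plus the derivative of `tan x cos(αx) cos(βx)`. For odd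
integer frequencies both cosines vanish at `π / 2`, so this boundary function extends continuously
by zero and contributes nothing. What remains is the orthogonality of sines and of cosines whose
frequencies have the same parity, which gives `(α² - 1) π / 4` when `α = β`.
-/

/-- The unnormalized AdS eigenfunction of real frequency `α`; the `e j` are multiples of those at
`α = ω j`. At multiples of `π / 2` its value is an artefact of `tan x = 0` and `y / 0 = 0`. -/
noncomputable def adsMode (α x : ℝ) : ℝ :=
  α * sin (α * x) / tan x - cos (α * x)

section IntegerFrequencies

variable {m n : ℤ}

theorem integral_cos_int_mul_of_even {k : ℤ} (hk : Even k) :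
    ∫ x in (0 : ℝ)..π / 2, cos (k * x) = if k = 0 then π / 2 else 0 := by
  split_ifs with hk0
  · simp [hk0]
  · obtain ⟨r, rfl⟩ := hk.exists_two_nsmul
    have hend : ((2 • r : ℤ) : ℝ) * (π / 2) = r * π := by push_cast [two_nsmul]; ring
    rw [intervalIntegral.integral_comp_mul_left _ (Int.cast_ne_zero.mpr hk0), integral_cos, hend,
      sin_int_mul_pi, mul_zero, sin_zero, sub_zero, smul_zero]

theorem integral_sin_int_mul_mul_sin_int_mul (hmn : Even (m + n)) (h0 : m + n ≠ 0) :
    ∫ x in (0 : ℝ)..π / 2, sin (m * x) * sin (n * x) = if m = n then π / 4 else 0 := by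
  have hprod (x : ℝ) : sin (m * x) * sin (n * x) =
      (cos ((m - n : ℤ) * x) - cos ((m + n : ℤ) * x)) / 2 := by
    push_cast
    rw [sub_mul, add_mul, ← two_mul_sin_mul_sin]
    ring
  have hsub : Even (m - n) := Int.even_sub.mpr (Int.even_add.mp hmn)
  simp_rw [hprod]
  rw [intervalIntegral.integral_div, intervalIntegral.integral_sub
    (Continuous.intervalIntegrable (by fun_prop) _ _)
    (Continuous.intervalIntegrable (by fun_prop) _ _),
    integral_cos_int_mul_of_even hsub, integral_cos_int_mul_of_even hmn, if_neg h0]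
  simp only [sub_eq_zero]
  split_ifs <;> ring

theorem integral_cos_int_mul_mul_cos_int_mul (hmn : Even (m + n)) (h0 : m + n ≠ 0) :
    ∫ x in (0 : ℝ)..π / 2, cos (m * x) * cos (n * x) = if m = n then π / 4 else 0 := by
  have hprod (x : ℝ) : cos (m * x) * cos (n * x) =
      (cos ((m - n : ℤ) * x) + cos ((m + n : ℤ) * x)) / 2 := by
    push_cast
    rw [sub_mul, add_mul, ← two_mul_cos_mul_cos]
    ring
  have hsub : Even (m - n) := Int.even_sub.mpr (Int.even_add.mp hmn)
  simp_rw [hprod]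
  rw [intervalIntegral.integral_div, intervalIntegral.integral_add
    (Continuous.intervalIntegrable (by fun_prop) _ _)
    (Continuous.intervalIntegrable (by fun_prop) _ _),
    integral_cos_int_mul_of_even hsub, integral_cos_int_mul_of_even hmn, if_neg h0]
  simp only [sub_eq_zero]
  split_ifs <;> ring

open Polynomial in
theorem exists_cos_int_mul_eq_cos_mul_eval (hn : Odd n) :
    ∃ p : ℝ[X], ∀ x, cos (n * x) = cos x * p.eval (cos x) := by
  have hroot : (Chebyshev.T ℝ n).eval 0 = 0 := by
    obtain ⟨k, rfl⟩ := hn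
    rw [← cos_pi_div_two, Chebyshev.T_real_cos, cos_pi_div_two]
    exact cos_eq_zero_iff.mpr ⟨k, by push_cast; ring⟩
  obtain ⟨p, hp⟩ := dvd_iff_isRoot.mpr hroot
  refine ⟨p, fun x => ?_⟩
  rw [← Chebyshev.T_real_cos, hp, C_0, sub_zero, eval_mul, eval_X]

/-- The poles of `tan` are cancelled by the first cosine; at the poles themselves Mathlib's value
`tan x = 0` agrees with the limit because the second cosine vanishes there. -/
theorem continuous_tan_mul_cos_int_mul_mul_cos_int_mul (hm : Odd m) (hn : Odd n) :
    Continuous fun x => tan x * (cos (m * x) * cos (n * x)) := by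
  obtain ⟨p, hp⟩ := exists_cos_int_mul_eq_cos_mul_eval hm
  obtain ⟨q, hq⟩ := exists_cos_int_mul_eq_cos_mul_eval hn
  have hregular : (fun x => tan x * (cos (m * x) * cos (n * x))) =
      fun x => sin x * p.eval (cos x) * (cos x * q.eval (cos x)) := by
    funext x
    rw [hp, hq, tan_eq_sin_div_cos]
    by_cases hx : cos x = 0
    · simp only [hx, div_zero, zero_mul, mul_zero]
    · field_simp
  rw [hregular]
  fun_prop

theorem exists_continuous_adsMode_mul_tan_eq (hn : Odd n) :
    ∃ g : ℝ → ℝ, Continuous g ∧ ∀ x, tan x ≠ 0 → adsMode n x * tan x = g x := by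
  obtain ⟨p, hp⟩ := exists_cos_int_mul_eq_cos_mul_eval hn
  refine ⟨fun x => n * sin (n * x) - sin x * p.eval (cos x), by fun_prop, fun x hx => ?_⟩
  have hcos_mul_tan : cos (n * x) * tan x = sin x * p.eval (cos x) := by
    rw [hp, mul_right_comm, mul_comm (cos x), tan_mul_cos (mt tan_eq_zero_of_cos_eq_zero hx)]
  rw [adsMode, sub_mul, div_mul_cancel₀ _ hx, hcos_mul_tan]

theorem intervalIntegrable_adsMode_mul_adsMode_mul_tan_sq (hm : Odd m) (hn : Odd n) :
    IntervalIntegrable (fun x => adsMode m x * adsMode n x * tan x ^ 2) volume 0 (π / 2) := by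
  obtain ⟨f, hf, hfm⟩ := exists_continuous_adsMode_mul_tan_eq hm
  obtain ⟨g, hg, hgn⟩ := exists_continuous_adsMode_mul_tan_eq hn
  refine ((hf.mul hg).intervalIntegrable 0 (π / 2)).congr_uIoo fun x hx => ?_
  rw [Set.uIoo_of_le pi_div_two_pos.le] at hx
  have htan := (tan_pos_of_pos_of_lt_pi_div_two hx.1 hx.2).ne'
  calc f x * g x = adsMode m x * tan x * (adsMode n x * tan x) := by
        rw [hfm x htan, hgn x htan]
    _ = adsMode m x * adsMode n x * tan x ^ 2 := by ring

theorem hasDerivAt_tan_mul_cos_mul_mul_cos_mul (α β : ℝ) {x : ℝ} (hx : tan x ≠ 0) :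
    HasDerivAt (fun y => tan y * (cos (α * y) * cos (β * y)))
      (adsMode α x * adsMode β x * tan x ^ 2 -
        (α * β * (sin (α * x) * sin (β * x)) - cos (α * x) * cos (β * x))) x := by
  have hcos : cos x ≠ 0 := mt tan_eq_zero_of_cos_eq_zero hx
  have hsec : 1 / cos x ^ 2 = 1 + tan x ^ 2 := by
    rw [← inv_one_add_tan_sq hcos, one_div, inv_inv]
  have hcos_mul (γ : ℝ) : HasDerivAt (fun y => cos (γ * y)) (-sin (γ * x) * γ) x := by
    simpa only [mul_one] using ((hasDerivAt_id' x).const_mul γ).cos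
  refine ((hasDerivAt_tan hcos).mul ((hcos_mul α).mul (hcos_mul β))).congr_deriv ?_
  rw [hsec, adsMode, adsMode, Pi.mul_apply]
  field_simp
  ring

theorem integral_adsMode_mul_adsMode_mul_tan_sq_eq_integral_sin_sub_cos (hm : Odd m) (hn : Odd n) :
    ∫ x in (0 : ℝ)..π / 2, adsMode m x * adsMode n x * tan x ^ 2 =
      ∫ x in (0 : ℝ)..π / 2,
        (m * n * (sin (m * x) * sin (n * x)) - cos (m * x) * cos (n * x)) := by
  have hint := intervalIntegrable_adsMode_mul_adsMode_mul_tan_sq hm hn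
  have htrig : IntervalIntegrable
      (fun x : ℝ => m * n * (sin (m * x) * sin (n * x)) - cos (m * x) * cos (n * x))
      volume 0 (π / 2) := Continuous.intervalIntegrable (by fun_prop) _ _
  have hboundary := intervalIntegral.integral_eq_sub_of_hasDerivAt_of_le pi_div_two_pos.le
    (continuous_tan_mul_cos_int_mul_mul_cos_int_mul hm hn).continuousOn
    (fun x hx => hasDerivAt_tan_mul_cos_mul_mul_cos_mul m n
      (tan_pos_of_pos_of_lt_pi_div_two hx.1 hx.2).ne')
    (hint.sub htrig)
  rw [intervalIntegral.integral_sub hint htrig, tan_pi_div_two, tan_zero] at hboundary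
  linarith

theorem integral_adsMode_mul_adsMode_mul_tan_sq (hm : Odd m) (hn : Odd n) (h0 : m + n ≠ 0) :
    ∫ x in (0 : ℝ)..π / 2, adsMode m x * adsMode n x * tan x ^ 2 =
      if m = n then ((m : ℝ) ^ 2 - 1) * (π / 4) else 0 := by
  rw [integral_adsMode_mul_adsMode_mul_tan_sq_eq_integral_sin_sub_cos hm hn,
    intervalIntegral.integral_sub (Continuous.intervalIntegrable (by fun_prop) _ _)
      (Continuous.intervalIntegrable (by fun_prop) _ _), intervalIntegral.integral_const_mul,
    integral_sin_int_mul_mul_sin_int_mul (hm.add_odd hn) h0,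
    integral_cos_int_mul_mul_cos_int_mul (hm.add_odd hn) h0]
  split_ifs with h
  · rw [h]; ring
  · ring

end IntegerFrequencies

/-- The factor turning the mode of odd integer frequency `α > 1` into a unit vector of
`L²(tan² x dx)` on `(0, π / 2)`. -/
noncomputable def adsNormConst (α : ℝ) : ℝ :=
  2 / √π * (√(α ^ 2 - 1))⁻¹

theorem adsNormConst_sq_mul {α : ℝ} (hα : 1 < α) :
    adsNormConst α ^ 2 * ((α ^ 2 - 1) * (π / 4)) = 1 := by
  have hpos : 0 < α ^ 2 - 1 := by nlinarith
  rw [adsNormConst, mul_pow, div_pow, inv_pow, sq_sqrt pi_pos.le, sq_sqrt hpos.le]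
  field_simp
  norm_num

theorem e_eq_adsNormConst_mul_adsMode (j : ℕ) (x : ℝ) :
    e j x = adsNormConst (ω j) * adsMode (ω j) x := rfl

theorem one_lt_ω (j : ℕ) : 1 < ω j := by
  rw [ω]
  linarith [Nat.cast_nonneg (α := ℝ) j]

theorem ω_eq_intCast (j : ℕ) : ω j = ((2 * j + 3 : ℤ) : ℝ) := by
  simp [ω]

theorem integral_adsMode_ω_mul_adsMode_ω_mul_tan_sq (i j : ℕ) :
    ∫ x in (0 : ℝ)..π / 2, adsMode (ω i) x * adsMode (ω j) x * tan x ^ 2 =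
      if i = j then (ω i ^ 2 - 1) * (π / 4) else 0 := by
  have hodd (k : ℕ) : Odd (2 * k + 3 : ℤ) := ⟨k + 1, by ring⟩
  simp only [ω_eq_intCast]
  rw [integral_adsMode_mul_adsMode_mul_tan_sq (hodd i) (hodd j) (by omega)]
  simp

/-- The family `{e_j}` is orthonormal with respect to the weighted inner product
`(f|g) = ∫₀^{π/2} f(x) g(x) tan²(x) dx`. -/
theorem ads_eigenfunctions_orthonormal (i j : ℕ) :
    (∫ x in Set.Ioo (0 : ℝ) (Real.pi / 2), e i x * e j x * Real.tan x ^ 2) =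
      if i = j then 1 else 0 := by
  have hscale (x : ℝ) : e i x * e j x * tan x ^ 2 = adsNormConst (ω i) * adsNormConst (ω j) *
      (adsMode (ω i) x * adsMode (ω j) x * tan x ^ 2) := by
    rw [e_eq_adsNormConst_mul_adsMode, e_eq_adsNormConst_mul_adsMode]
    ring
  simp_rw [hscale]
  rw [← integral_Ioc_eq_integral_Ioo, ← intervalIntegral.integral_of_le pi_div_two_pos.le,
    intervalIntegral.integral_const_mul, integral_adsMode_ω_mul_adsMode_ω_mul_tan_sq]
  split_ifs with hij
  · rw [← hij, ← sq]
    exact adsNormConst_sq_mul (one_lt_ω i)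
  · rw [mul_zero]
end

section
/- For all i, j ∈ ℕ, ∫₀^{π/2} e_i'(x)·e_j'(x)·tan²(x) dx = ω_i²·δ_{ij}; in particular the family {e_j'/ω_j} is orthonormal with respect to the weighted inner product (f|g) = ∫₀^{π/2} f(x)g(x)tan²(x) dx. -/
/-!
Up to a constant, `e_j' tan` is `sin · u_j'` with `u_j x = sin (ω_j x) / sin x`, a radial
eigenfunction of the Laplacian of the 3-sphere: `(sin² u_j')' = -(ω_j² - 1) sin² u_j`. Integrating
by parts, `∫ sin² u_i' u_j' = (ω_i² - 1) ∫ sin (ω_i x) sin (ω_j x)`; the boundary terms vanish since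
`sin 0 = 0` and, `ω_i` being odd, `u_i' (π / 2) = ω_i cos (ω_i π / 2) = 0`. What is left is the
orthogonality of the sines of odd frequency on `(0, π / 2)`.
-/

open Real MeasureTheory

/-- The function `sin x * (sin (a x) / sin x)'`, a multiple of which is `e_j' tan` for `a = ω_j`.
Writing `sin (a x) / sin x` as `a sinc (a x) / sinc x` gives it its limit as value at `x = 0`, where
the formula `a cos (a x) - sin (a x) cot x` has the junk value `a`. -/
noncomputable def weightedSlope (a x : ℝ) : ℝ :=
  a * cos (a * x) - a * sinc (a * x) / sinc x * cos x

section WeightedSlope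

variable {c x : ℝ}

theorem mul_sinc (x : ℝ) : x * sinc x = sin x := by
  rcases eq_or_ne x 0 with rfl | hx
  · simp
  · rw [sinc_of_ne_zero hx, mul_div_cancel₀ _ hx]

theorem sinc_ne_zero_of_mem_Ioo (hx : x ∈ Set.Ioo (-π) π) : sinc x ≠ 0 := by
  rcases eq_or_ne x 0 with rfl | h0
  · simp
  · rw [sinc_of_ne_zero h0]
    exact div_ne_zero ((sin_eq_zero_iff_of_lt_of_lt hx.1 hx.2).not.2 h0) h0

theorem continuousOn_weightedSlope (a : ℝ) : ContinuousOn (weightedSlope a) (Set.Ioo (-π) π) := by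
  have hnum : Continuous fun x => a * sinc (a * x) :=
    continuous_const.mul (continuous_sinc.comp (continuous_const_mul a))
  have hquot := hnum.continuousOn.div continuous_sinc.continuousOn
    fun x (hx : x ∈ Set.Ioo (-π) π) => sinc_ne_zero_of_mem_Ioo hx
  have hcos : Continuous fun x => a * cos (a * x) := by fun_prop
  exact hcos.continuousOn.sub (hquot.mul continuous_cos.continuousOn)

theorem weightedSlope_of_ne_zero (a : ℝ) (hx : x ≠ 0) :
    weightedSlope a x = a * cos (a * x) - sin (a * x) * cot x := by
  have hquot : a * sinc (a * x) / sinc x = sin (a * x) / sin x := by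
    rw [← mul_div_mul_left _ _ hx, mul_sinc, ← mul_sinc (a * x)]
    ring
  rw [weightedSlope, hquot, cot_eq_cos_div_sin]
  ring

theorem hasDerivAt_cot (hx : sin x ≠ 0) : HasDerivAt cot (-(1 + cot x ^ 2)) x := by
  have hcot : cot = fun y => cos y / sin y := funext cot_eq_cos_div_sin
  rw [hcot]
  refine ((hasDerivAt_cos x).div (hasDerivAt_sin x) hx).congr_deriv ?_
  field_simp
  ring

theorem hasDerivAt_weightedSlope (a : ℝ) (hx : sin x ≠ 0) :
    HasDerivAt (weightedSlope a) (-((a ^ 2 - 1) * sin (a * x)) - weightedSlope a x * cot x) x := by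
  have hx0 : x ≠ 0 := by rintro rfl; exact hx sin_zero
  have hlin : HasDerivAt (fun y => a * y) a x := hasDerivAt_const_mul a
  have hcotForm := (hlin.cos.const_mul a).sub (hlin.sin.mul (hasDerivAt_cot hx))
  refine (hcotForm.congr_of_eventuallyEq ?_).congr_deriv ?_
  · filter_upwards [eventually_ne_nhds hx0] with y hy using weightedSlope_of_ne_zero a hy
  · rw [weightedSlope_of_ne_zero a hx0]
    ring

theorem hasDerivAt_weightedSlope_mul_sin (a b : ℝ) (hx : sin x ≠ 0) :
    HasDerivAt (fun y => weightedSlope a y * sin (b * y))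
      (weightedSlope a x * weightedSlope b x - (a ^ 2 - 1) * (sin (a * x) * sin (b * x))) x := by
  have hx0 : x ≠ 0 := by rintro rfl; exact hx sin_zero
  have hlin : HasDerivAt (fun y => b * y) b x := hasDerivAt_const_mul b
  refine ((hasDerivAt_weightedSlope a hx).mul hlin.sin).congr_deriv ?_
  rw [weightedSlope_of_ne_zero b hx0]
  ring

theorem integral_weightedSlope_mul_weightedSlope (a b : ℝ) (hc : c ∈ Set.Ico 0 π) :
    ∫ x in 0..c, weightedSlope a x * weightedSlope b x =
      (a ^ 2 - 1) * (∫ x in 0..c, sin (a * x) * sin (b * x)) + weightedSlope a c * sin (b * c) := by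
  have hsub : Set.Icc 0 c ⊆ Set.Ioo (-π) π := Set.Icc_subset_Ioo (neg_lt_zero.2 pi_pos) hc.2
  have hcont (d : ℝ) : ContinuousOn (weightedSlope d) (Set.Icc 0 c) :=
    (continuousOn_weightedSlope d).mono hsub
  have hslopes :
      IntervalIntegrable (fun x => weightedSlope a x * weightedSlope b x) volume 0 c :=
    ((hcont a).mul (hcont b)).intervalIntegrable_of_Icc hc.1
  have hsines :
      IntervalIntegrable (fun x => (a ^ 2 - 1) * (sin (a * x) * sin (b * x))) volume 0 c :=
    Continuous.intervalIntegrable (by fun_prop) 0 c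
  have hparts := intervalIntegral.integral_eq_sub_of_hasDerivAt_of_le
    (f := fun x => weightedSlope a x * sin (b * x)) hc.1
    ((hcont a).mul (by fun_prop : ContinuousOn (fun x => sin (b * x)) (Set.Icc 0 c)))
    (fun x hx => hasDerivAt_weightedSlope_mul_sin a b
      (sin_pos_of_pos_of_lt_pi hx.1 (hx.2.trans hc.2)).ne')
    (hslopes.sub hsines)
  rw [intervalIntegral.integral_sub hslopes hsines, intervalIntegral.integral_const_mul] at hparts
  simp only [mul_zero, sin_zero, sub_zero] at hparts
  linarith

end WeightedSlope

theorem integral_cos_even_mul (n : ℤ) :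
    ∫ x in 0..π / 2, cos (2 * n * x) = if n = 0 then π / 2 else 0 := by
  split_ifs with hn
  · simp [hn]
  · have hfreq : (2 * n : ℝ) ≠ 0 := mul_ne_zero two_ne_zero (Int.cast_ne_zero.2 hn)
    have hend : 2 * n * (π / 2) = n * π := by ring
    rw [intervalIntegral.integral_comp_mul_left cos hfreq, integral_cos, hend, sin_int_mul_pi]
    simp

theorem integral_sin_odd_mul_sin_odd (m n : ℕ) :
    ∫ x in 0..π / 2, sin ((2 * m + 1) * x) * sin ((2 * n + 1) * x) =
      if m = n then π / 4 else 0 := by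
  have hprod (x : ℝ) : sin ((2 * m + 1) * x) * sin ((2 * n + 1) * x) =
      (cos (2 * (m - n : ℤ) * x) - cos (2 * (m + n + 1 : ℤ) * x)) / 2 := by
    have h := two_mul_sin_mul_sin ((2 * m + 1) * x) ((2 * n + 1) * x)
    push_cast
    ring_nf at h ⊢
    linarith
  have hsum : (m + n + 1 : ℤ) ≠ 0 := by positivity
  have hint (k : ℤ) : IntervalIntegrable (fun x => cos (2 * k * x)) volume 0 (π / 2) :=
    Continuous.intervalIntegrable (by fun_prop) 0 (π / 2)
  simp only [hprod]
  rw [intervalIntegral.integral_div, intervalIntegral.integral_sub (hint _) (hint _),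
    integral_cos_even_mul, integral_cos_even_mul, if_neg hsum]
  simp only [sub_eq_zero, Nat.cast_inj]
  split_ifs <;> ring

theorem cos_odd_mul_pi_div_two (n : ℕ) : cos ((2 * n + 1) * (π / 2)) = 0 :=
  cos_eq_zero_iff.2 ⟨n, by push_cast; ring⟩

theorem weightedSlope_odd_pi_div_two (n : ℕ) : weightedSlope (2 * n + 1) (π / 2) = 0 := by
  rw [weightedSlope, cos_odd_mul_pi_div_two, cos_pi_div_two]
  ring

theorem integral_weightedSlope_odd_mul_weightedSlope_odd (m n : ℕ) :
    ∫ x in 0..π / 2, weightedSlope (2 * m + 1) x * weightedSlope (2 * n + 1) x =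
      if m = n then ((2 * m + 1) ^ 2 - 1) * (π / 4) else 0 := by
  have hmem : π / 2 ∈ Set.Ico 0 π := ⟨pi_div_two_pos.le, half_lt_self pi_pos⟩
  rw [integral_weightedSlope_mul_weightedSlope _ _ hmem, integral_sin_odd_mul_sin_odd,
    weightedSlope_odd_pi_div_two, zero_mul, add_zero, mul_ite, mul_zero]

theorem ω_eq_odd (j : ℕ) : ω j = 2 * (j + 1 : ℕ) + 1 := by
  rw [ω]
  push_cast
  ring

theorem integral_weightedSlope_ω_mul_weightedSlope_ω (i j : ℕ) :
    ∫ x in 0..π / 2, weightedSlope (ω i) x * weightedSlope (ω j) x =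
      if i = j then (ω i ^ 2 - 1) * (π / 4) else 0 := by
  simp only [ω_eq_odd, integral_weightedSlope_odd_mul_weightedSlope_odd, Nat.add_right_cancel_iff]

/-- The factor that turns `weightedSlope a` into `e_j' tan` when `a = ω_j`. -/
noncomputable def slopeNormalization (a : ℝ) : ℝ :=
  2 / √π * a * (√(a ^ 2 - 1))⁻¹

theorem e'_mul_tan (j : ℕ) {x : ℝ} (hx : tan x ≠ 0) :
    e' j x * tan x = slopeNormalization (ω j) * weightedSlope (ω j) x := by
  have hx0 : x ≠ 0 := by rintro rfl; exact hx tan_zero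
  rw [e', slopeNormalization, weightedSlope_of_ne_zero _ hx0, ← tan_inv_eq_cot]
  field_simp

theorem slopeNormalization_sq_mul {a : ℝ} (ha : 1 < a) :
    slopeNormalization a ^ 2 * ((a ^ 2 - 1) * (π / 4)) = a ^ 2 := by
  have hpos : 0 < a ^ 2 - 1 := sub_pos.2 (one_lt_pow₀ ha two_ne_zero)
  rw [slopeNormalization, mul_pow, mul_pow, div_pow, inv_pow, sq_sqrt pi_pos.le, sq_sqrt hpos.le]
  field_simp
  norm_num

/-- For all `i, j ∈ ℕ`, `∫₀^{π/2} e_i'(x)·e_j'(x)·tan²(x) dx = ω_i²·δ_{ij}`;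
in particular `{e_j'/ω_j}` is orthonormal for the weighted inner product. -/
theorem ads_eigenfunction_derivatives_orthogonal (i j : ℕ) :
    (∫ x in Set.Ioo (0 : ℝ) (Real.pi / 2), e' i x * e' j x * Real.tan x ^ 2) =
      ω i ^ 2 * (if i = j then 1 else 0) := by
  have hintegrand : ∀ x ∈ Set.Ioo 0 (π / 2), e' i x * e' j x * tan x ^ 2 =
      slopeNormalization (ω i) * slopeNormalization (ω j) *
        (weightedSlope (ω i) x * weightedSlope (ω j) x) := by
    intro x hx
    have htan : tan x ≠ 0 := (tan_pos_of_pos_of_lt_pi_div_two hx.1 hx.2).ne'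
    calc
      e' i x * e' j x * tan x ^ 2 = (e' i x * tan x) * (e' j x * tan x) := by ring
      _ = _ := by rw [e'_mul_tan i htan, e'_mul_tan j htan]; ring
  rw [setIntegral_congr_fun measurableSet_Ioo hintegrand, integral_const_mul,
    ← integral_Ioc_eq_integral_Ioo, ← intervalIntegral.integral_of_le pi_div_two_pos.le,
    integral_weightedSlope_ω_mul_weightedSlope_ω]
  rcases eq_or_ne i j with rfl | hij
  · simp only [if_true, mul_one, ← sq, slopeNormalization_sq_mul (one_lt_ω i)]
  · simp only [if_neg hij, mul_zero]
end

section
/- For every m ∈ ℕ, ∫₀^{π/2} e_m(x)·tan²(x) dx = (2/√π)·((−1)^m/ω_m)·√(ω_m² − 1). -/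
open Real MeasureTheory

/-!
For every real `w ≠ 0`, a primitive of `(w sin(wx)/tan x − cos(wx)) tan² x` is
`sin(wx)/w − cos(wx) tan x`. It appears to be singular at `π/2`, but for an odd integer
`w = 2k + 1` the zero of `cos(wx)` cancels the pole of `tan x`: the quotient `cos(wx)/cos x` is
`(−1)^k U_{2k}(sin x)`, with `U` the Chebyshev polynomials of the second kind. The primitive thus
extends smoothly to `ℝ`, and its value at `π/2` follows from `U_{2k}(1) = 2k + 1`.
-/

lemma sin_odd_mul_pi_div_two (k : ℤ) : sin ((2 * k + 1) * (π / 2)) = (-1) ^ k := by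
  rw [← cos_int_mul_pi, ← sin_add_pi_div_two]
  ring_nf

lemma cos_odd_mul_eq_chebyshev_sin_mul_cos (k : ℤ) (x : ℝ) :
    cos ((2 * k + 1) * x) =
      (-1) ^ k * (Polynomial.Chebyshev.U ℝ (2 * k)).eval (sin x) * cos x := by
  have chebyshev := Polynomial.Chebyshev.U_real_cos (π / 2 - x) (2 * k)
  rw [cos_pi_div_two_sub, sin_pi_div_two_sub] at chebyshev
  have reflection : cos ((2 * k + 1) * x) = (-1) ^ k * sin ((2 * k + 1) * (π / 2 - x)) := by
    have hangle : (2 * k + 1) * x = π / 2 - (2 * k + 1) * (π / 2 - x) + k * π := by ring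
    rw [hangle, cos_add_int_mul_pi, cos_pi_div_two_sub]
  push_cast at chebyshev
  rw [reflection, mul_assoc, chebyshev]

lemma hasDerivAt_sin_div_sub_cos_mul_tan {w x : ℝ} (hw : w ≠ 0) (hx : cos x ≠ 0) :
    HasDerivAt (fun y ↦ sin (w * y) / w - cos (w * y) * tan y)
      ((w * sin (w * x) / tan x - cos (w * x)) * tan x ^ 2) x := by
  have hmul : HasDerivAt (fun y ↦ w * y) w x := hasDerivAt_const_mul w
  have hderiv := (hmul.sin.div_const w).sub (hmul.cos.mul (hasDerivAt_tan hx))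
  have hsec : 1 / cos x ^ 2 = 1 + tan x ^ 2 := by
    rw [← inv_one_add_tan_sq hx, one_div, inv_inv]
  refine hderiv.congr_deriv ?_
  rw [hsec]
  by_cases htan : tan x = 0
  · simp [htan, hw]
  · field_simp
    ring

/-- The smooth extension to `ℝ` of `sin (w * x) / w - cos (w * x) * tan x` for the odd frequency
`w = 2 * k + 1`, with the pole of `tan` removed by writing `cos (w * x) / cos x` as a Chebyshev
polynomial in `sin x`. -/
noncomputable def oddPrimitive (k : ℤ) (x : ℝ) : ℝ :=
  sin ((2 * k + 1) * x) / (2 * k + 1) -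
    (-1) ^ k * (Polynomial.Chebyshev.U ℝ (2 * k)).eval (sin x) * sin x

lemma oddPrimitive_eq_of_cos_ne_zero (k : ℤ) {x : ℝ} (hx : cos x ≠ 0) :
    oddPrimitive k x =
      sin ((2 * k + 1) * x) / (2 * k + 1) - cos ((2 * k + 1) * x) * tan x := by
  rw [oddPrimitive, cos_odd_mul_eq_chebyshev_sin_mul_cos, mul_assoc _ (cos x),
    mul_comm (cos x), tan_mul_cos hx]

lemma contDiff_oddPrimitive (k : ℤ) {n : WithTop ℕ∞} : ContDiff ℝ n (oddPrimitive k) := by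
  have hU : ContDiff ℝ n fun y ↦ (Polynomial.Chebyshev.U ℝ (2 * k)).eval y :=
    (Polynomial.Chebyshev.U ℝ (2 * k)).contDiff_aeval n
  unfold oddPrimitive
  fun_prop

lemma two_mul_intCast_add_one_ne_zero {R : Type*} [Ring R] [CharZero R] (k : ℤ) :
    (2 * k + 1 : R) ≠ 0 := by
  exact_mod_cast (by omega : 2 * k + 1 ≠ 0)

lemma deriv_oddPrimitive (k : ℤ) {x : ℝ} (hx : cos x ≠ 0) :
    deriv (oddPrimitive k) x =
      ((2 * k + 1) * sin ((2 * k + 1) * x) / tan x - cos ((2 * k + 1) * x)) * tan x ^ 2 := by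
  refine HasDerivAt.deriv <| (hasDerivAt_sin_div_sub_cos_mul_tan
    (two_mul_intCast_add_one_ne_zero k) hx).congr_of_eventuallyEq ?_
  filter_upwards [continuous_cos.continuousAt.eventually_ne hx] with y hy
  exact oddPrimitive_eq_of_cos_ne_zero k hy

lemma oddPrimitive_zero (k : ℤ) : oddPrimitive k 0 = 0 := by
  simp [oddPrimitive]

lemma oddPrimitive_pi_div_two (k : ℤ) :
    oddPrimitive k (π / 2) = (-1) ^ k * (1 / (2 * k + 1) - (2 * k + 1)) := by
  rw [oddPrimitive, sin_odd_mul_pi_div_two, sin_pi_div_two, Polynomial.Chebyshev.U_eval_one]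
  push_cast
  ring

lemma integral_odd_mode_mul_tan_sq (k : ℤ) :
    ∫ x in Set.Ioo 0 (π / 2),
        ((2 * k + 1) * sin ((2 * k + 1) * x) / tan x - cos ((2 * k + 1) * x)) * tan x ^ 2 =
      ((-1) ^ k * (1 / (2 * k + 1) - (2 * k + 1)) : ℝ) := by
  calc
    _ = ∫ x in Set.Ioo 0 (π / 2), deriv (oddPrimitive k) x := by
      refine setIntegral_congr_fun measurableSet_Ioo fun x hx ↦ ?_
      have hcos : 0 < cos x := cos_pos_of_mem_Ioo ⟨by linarith [hx.1, pi_pos], hx.2⟩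
      exact (deriv_oddPrimitive k hcos.ne').symm
    _ = ∫ x in (0)..(π / 2), deriv (oddPrimitive k) x := by
      rw [intervalIntegral.integral_of_le pi_div_two_pos.le, integral_Ioc_eq_integral_Ioo]
    _ = oddPrimitive k (π / 2) - oddPrimitive k 0 :=
      intervalIntegral.integral_deriv_of_contDiffOn_Icc
        (contDiff_oddPrimitive k).contDiffOn pi_div_two_pos.le
    _ = _ := by rw [oddPrimitive_pi_div_two, oddPrimitive_zero, sub_zero]

lemma omega_eq_odd (m : ℕ) : ω m = 2 * ((m + 1 : ℤ) : ℝ) + 1 := by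
  rw [ω]
  push_cast
  ring

lemma omega_ne_zero (m : ℕ) : ω m ≠ 0 := by
  rw [omega_eq_odd]
  exact two_mul_intCast_add_one_ne_zero (m + 1)

lemma integral_omega_mode_mul_tan_sq (m : ℕ) :
    ∫ x in Set.Ioo 0 (π / 2), (ω m * sin (ω m * x) / tan x - cos (ω m * x)) * tan x ^ 2 =
      (-1) ^ m / ω m * (ω m ^ 2 - 1) := by
  have hω : ω m ≠ 0 := omega_ne_zero m
  have integral_eq := integral_odd_mode_mul_tan_sq (m + 1)
  rw [← omega_eq_odd, zpow_add_one₀ (by norm_num), zpow_natCast] at integral_eq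
  rw [integral_eq]
  field_simp
  ring

/-- For every `m ∈ ℕ`, `∫₀^{π/2} e_m(x)·tan²(x) dx = (2/√π)·((−1)^m/ω_m)·√(ω_m² − 1)`. -/
theorem ads_eigenfunction_integral_against_one (m : ℕ) :
    (∫ x in Set.Ioo (0 : ℝ) (Real.pi / 2), e m x * Real.tan x ^ 2) =
      (2 / Real.sqrt Real.pi) * ((-1 : ℝ) ^ m / ω m) * Real.sqrt (ω m ^ 2 - 1) := by
  have inv_sqrt_mul : (√(ω m ^ 2 - 1))⁻¹ * (ω m ^ 2 - 1) = √(ω m ^ 2 - 1) := by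
    rw [inv_mul_eq_div, div_sqrt]
  simp only [e, mul_assoc (2 / √π * _)]
  rw [integral_const_mul, integral_omega_mode_mul_tan_sq]
  linear_combination 2 / √π * ((-1) ^ m / ω m) * inv_sqrt_mul
end

section
/- For every j ∈ ℕ and every x ∈ (0, π/2), |e_j(x)| ≤ (2/√π)·ω_j. -/
open Real MeasureTheory

/-!
Expanding `sin ((n - 1) * x)` by the subtraction formula gives
`n * sin (n * x) * cos x - cos (n * x) * sin x
  = (n - 1) * cos (n * x) * sin x + n * sin ((n - 1) * x)`.
Since `|sin ((n - 1) * x)| ≤ (n - 1) * |sin x|`, the right-hand side is at most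
`(n ^ 2 - 1) * |sin x|` in absolute value. Dividing by `sin x` for `n = ω j` and multiplying by the
normalization `(ω j ^ 2 - 1) ^ (-1 / 2)` of `e j` leaves `√(ω j ^ 2 - 1) ≤ ω j`.
-/

theorem abs_sin_natCast_mul_le (n : ℕ) (x : ℝ) : |sin (n * x)| ≤ n * |sin x| := by
  induction n with
  | zero => simp
  | succ n ih =>
    calc |sin ((n + 1 : ℕ) * x)|
        = |sin (n * x) * cos x + cos (n * x) * sin x| := by
          rw [Nat.cast_succ, add_one_mul, sin_add]
      _ ≤ |sin (n * x)| * |cos x| + |cos (n * x)| * |sin x| := by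
          simpa only [abs_mul] using abs_add_le (sin (n * x) * cos x) (cos (n * x) * sin x)
      _ ≤ n * |sin x| * 1 + 1 * |sin x| := by
          gcongr
          exacts [abs_cos_le_one x, abs_cos_le_one _]
      _ = (n + 1 : ℕ) * |sin x| := by push_cast; ring

theorem mul_sin_mul_cos_sub_cos_mul_sin (a x : ℝ) :
    a * sin (a * x) * cos x - cos (a * x) * sin x =
      (a - 1) * cos (a * x) * sin x + a * sin ((a - 1) * x) := by
  rw [sub_one_mul a x, sin_sub]
  ring

theorem abs_natCast_mul_sin_mul_cos_sub_cos_mul_sin_le {n : ℕ} (hn : n ≠ 0) (x : ℝ) :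
    |n * sin (n * x) * cos x - cos (n * x) * sin x| ≤ (n ^ 2 - 1) * |sin x| := by
  have hn_sub : (0 : ℝ) ≤ n - 1 := sub_nonneg.2 (mod_cast Nat.one_le_iff_ne_zero.2 hn)
  have h_sin : |sin ((n - 1) * x)| ≤ (n - 1) * |sin x| := by
    simpa only [Nat.cast_pred (Nat.pos_of_ne_zero hn)] using abs_sin_natCast_mul_le (n - 1) x
  calc |n * sin (n * x) * cos x - cos (n * x) * sin x|
      = |(n - 1) * cos (n * x) * sin x + n * sin ((n - 1) * x)| := by
        rw [mul_sin_mul_cos_sub_cos_mul_sin]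
    _ ≤ (n - 1) * |cos (n * x)| * |sin x| + n * |sin ((n - 1) * x)| := by
        simpa only [abs_mul, abs_of_nonneg hn_sub, Nat.abs_cast] using
          abs_add_le ((n - 1) * cos (n * x) * sin x) (n * sin ((n - 1) * x))
    _ ≤ (n - 1) * 1 * |sin x| + n * ((n - 1) * |sin x|) := by
        gcongr
        exact abs_cos_le_one _
    _ = (n ^ 2 - 1) * |sin x| := by ring

theorem abs_natCast_mul_sin_mul_cot_sub_cos_le {n : ℕ} (hn : n ≠ 0) {x : ℝ} (hx : sin x ≠ 0) :
    |n * sin (n * x) * cot x - cos (n * x)| ≤ n ^ 2 - 1 := by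
  have h_div : n * sin (n * x) * cot x - cos (n * x) =
      (n * sin (n * x) * cos x - cos (n * x) * sin x) / sin x := by
    rw [cot_eq_cos_div_sin]
    field_simp
  rw [h_div, abs_div, div_le_iff₀ (abs_pos.2 hx)]
  exact abs_natCast_mul_sin_mul_cos_sub_cos_mul_sin_le hn x

theorem ω_eq_natCast (j : ℕ) : ω j = (2 * j + 3 : ℕ) := by
  simp [ω]

theorem sqrt_ω_sq_sub_one_le (j : ℕ) : √(ω j ^ 2 - 1) ≤ ω j :=
  sqrt_le_iff.2 ⟨by rw [ω]; positivity, sub_le_self _ zero_le_one⟩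

theorem ads_eigenfunction_sup_bound_general (j : ℕ) {x : ℝ} (hx : tan x ≠ 0) :
    |e j x| ≤ 2 / √π * √(ω j ^ 2 - 1) := by
  have h_bound : |ω j * sin (ω j * x) / tan x - cos (ω j * x)| ≤ ω j ^ 2 - 1 := by
    have h_sin : sin x ≠ 0 := fun h ↦ hx (by rw [tan_eq_sin_div_cos, h, zero_div])
    rw [div_eq_mul_inv, tan_inv_eq_cot, ω_eq_natCast]
    exact abs_natCast_mul_sin_mul_cot_sub_cos_le (by lia) h_sin
  calc |e j x|
      = 2 / √π * (√(ω j ^ 2 - 1))⁻¹ *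
          |ω j * sin (ω j * x) / tan x - cos (ω j * x)| := by
        rw [e, abs_mul, abs_of_nonneg (by positivity)]
    _ ≤ 2 / √π * (√(ω j ^ 2 - 1))⁻¹ * (ω j ^ 2 - 1) := by gcongr
    _ = 2 / √π * √(ω j ^ 2 - 1) := by rw [mul_assoc, inv_mul_eq_div, div_sqrt]

/-- For every `j ∈ ℕ` and `x ∈ (0, π/2)`, `|e_j(x)| ≤ (2/√π)·ω_j`. -/
theorem ads_eigenfunction_sup_bound (j : ℕ) (x : ℝ)
    (hx : x ∈ Set.Ioo 0 (Real.pi / 2)) :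
    |e j x| ≤ (2 / Real.sqrt Real.pi) * ω j := by
  have h_tan : tan x ≠ 0 := (tan_pos_of_pos_of_lt_pi_div_two hx.1 hx.2).ne'
  exact (ads_eigenfunction_sup_bound_general j h_tan).trans <|
    mul_le_mul_of_nonneg_left (sqrt_ω_sq_sub_one_le j) (by positivity)
end

section
/- For every j ∈ ℕ and every x ∈ (0, π/2), |tan(x)·e_j'(x)| ≤ (4/√π)·ω_j; equivalently, |tan(x)·e_j'(x)/ω_j| ≤ 4/√π. -/
open Real MeasureTheory

/-!
The factor `tan x` turns the bracket in `e_j'` into `w cos (w x) - cot x sin (w x)` with `w = ω_j`.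
Bounding its two terms separately by `w` gives `2 w`, which just misses the required
`2 √(w² - 1)`. If `w x ≤ 1`, however, both terms lie in `[0, w]`, so their difference is at most
`w`; and if `w x > 1`, then `cot x < 1 / x < w`, and the Cauchy-Schwarz inequality gives `√2 w`,
which is at most `2 √(w² - 1)` as soon as `w² ≥ 2`.
-/

theorem abs_mul_cos_sub_mul_sin_le_sqrt (a b θ : ℝ) :
    |a * cos θ - b * sin θ| ≤ √(a ^ 2 + b ^ 2) := by
  apply abs_le_sqrt
  calc (a * cos θ - b * sin θ) ^ 2
      ≤ (a * cos θ - b * sin θ) ^ 2 + (a * sin θ + b * cos θ) ^ 2 :=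
        le_add_of_nonneg_right (sq_nonneg _)
    _ = (a ^ 2 + b ^ 2) * (sin θ ^ 2 + cos θ ^ 2) := by ring
    _ = a ^ 2 + b ^ 2 := by rw [sin_sq_add_cos_sq, mul_one]

theorem sqrt_sq_add_sq_le_sqrt_two_mul {u w : ℝ} (hu : 0 ≤ u) (huw : u ≤ w) :
    √(w ^ 2 + u ^ 2) ≤ √2 * w := by
  have hw : 0 ≤ w := hu.trans huw
  calc √(w ^ 2 + u ^ 2) ≤ √(2 * w ^ 2) := by
        gcongr
        linarith [pow_le_pow_left₀ hu huw 2]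
    _ = √2 * w := by rw [sqrt_mul zero_le_two, sqrt_sq hw]

theorem abs_mul_cos_sub_mul_sin_le_of_mul_le_one {u w x : ℝ} (hu : 0 ≤ u) (hw : 0 ≤ w)
    (hx : 0 ≤ x) (hux : u * x ≤ 1) (hwx : w * x ≤ 1) :
    |w * cos (w * x) - u * sin (w * x)| ≤ w := by
  have hθ : 0 ≤ w * x := mul_nonneg hw hx
  have hcos : 0 ≤ cos (w * x) := (cos_pos_of_le_one (by rwa [abs_of_nonneg hθ])).le
  have hsin : 0 ≤ sin (w * x) :=
    sin_nonneg_of_nonneg_of_le_pi hθ (by linarith [pi_gt_three])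
  refine abs_sub_le_of_nonneg_of_le (mul_nonneg hw hcos)
    (mul_le_of_le_one_right hw (cos_le_one _)) (mul_nonneg hu hsin) ?_
  calc u * sin (w * x) ≤ u * (w * x) := mul_le_mul_of_nonneg_left (sin_le hθ) hu
    _ = w * (u * x) := by ring
    _ ≤ w := mul_le_of_le_one_right hw hux

theorem abs_mul_cos_sub_mul_sin_le_sqrt_two_mul {u w x : ℝ} (hu : 0 ≤ u) (hw : 0 ≤ w)
    (hx : 0 ≤ x) (hux : u * x ≤ 1) :
    |w * cos (w * x) - u * sin (w * x)| ≤ √2 * w := by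
  rcases le_or_gt (w * x) 1 with hwx | hwx
  · exact (abs_mul_cos_sub_mul_sin_le_of_mul_le_one hu hw hx hux hwx).trans
      (le_mul_of_one_le_left hw (one_le_sqrt.mpr one_le_two))
  · have huw : u ≤ w := (lt_of_mul_lt_mul_right (hux.trans_lt hwx) hx).le
    exact (abs_mul_cos_sub_mul_sin_le_sqrt w u _).trans (sqrt_sq_add_sq_le_sqrt_two_mul hu huw)

theorem sqrt_two_mul_le_two_mul_sqrt_sq_sub_one {w : ℝ} (hw : √2 ≤ w) :
    √2 * w ≤ 2 * √(w ^ 2 - 1) := by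
  have hw2 : 2 ≤ w ^ 2 := (sqrt_le_left ((sqrt_nonneg 2).trans hw)).mp hw
  refine le_of_sq_le_sq ?_ (by positivity)
  rw [mul_pow, mul_pow, sq_sqrt zero_le_two, sq_sqrt (by linarith)]
  linarith

theorem ads_eigenfunction_derivative_sup_bound_general {w x : ℝ} (hw : √2 ≤ w)
    (hx : x ∈ Set.Ioo 0 (π / 2)) :
    |tan x * (2 / √π * w * (√(w ^ 2 - 1))⁻¹ *
      (w * cos (w * x) / tan x - sin (w * x) / tan x ^ 2))| ≤ 4 / √π * w := by
  obtain ⟨hx0, hx1⟩ := hx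
  have hxtan : x < tan x := lt_tan hx0 hx1
  have htan : 0 < tan x := hx0.trans hxtan
  have hw0 : 0 < w := (sqrt_pos.mpr two_pos).trans_le hw
  have hcot : (tan x)⁻¹ * x ≤ 1 := inv_mul_le_one_of_le₀ hxtan.le htan.le
  have hscale : √2 * w ≤ 2 * √(w ^ 2 - 1) := sqrt_two_mul_le_two_mul_sqrt_sq_sub_one hw
  have hnorm : 0 < √(w ^ 2 - 1) := by
    linarith [mul_pos (sqrt_pos.mpr two_pos) hw0]
  have hbracket : |w * cos (w * x) - (tan x)⁻¹ * sin (w * x)| ≤ 2 * √(w ^ 2 - 1) :=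
    (abs_mul_cos_sub_mul_sin_le_sqrt_two_mul (inv_nonneg.mpr htan.le) hw0.le hx0.le hcot).trans
      hscale
  calc _ = |2 / √π * w * (√(w ^ 2 - 1))⁻¹ * (w * cos (w * x) - (tan x)⁻¹ * sin (w * x))| := by
        congr 1
        field_simp
    _ = 2 / √π * w * (√(w ^ 2 - 1))⁻¹ * |w * cos (w * x) - (tan x)⁻¹ * sin (w * x)| := by
        rw [abs_mul, abs_of_nonneg (by positivity)]
    _ ≤ 2 / √π * w * (√(w ^ 2 - 1))⁻¹ * (2 * √(w ^ 2 - 1)) := by gcongr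
    _ = 4 / √π * w := by
        field_simp
        norm_num

theorem sqrt_two_le_ω (j : ℕ) : √2 ≤ ω j :=
  calc √2 ≤ 3 / 2 := sqrt_two_lt_three_halves.le
    _ ≤ ω j := by
      unfold ω
      linarith [j.cast_nonneg (α := ℝ)]

/-- For every `j ∈ ℕ` and `x ∈ (0, π/2)`, `|tan(x)·e_j'(x)| ≤ (4/√π)·ω_j`. -/
theorem ads_eigenfunction_derivative_sup_bound (j : ℕ) (x : ℝ)
    (hx : x ∈ Set.Ioo 0 (Real.pi / 2)) :
    |Real.tan x * e' j x| ≤ (4 / Real.sqrt Real.pi) * ω j :=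
  ads_eigenfunction_derivative_sup_bound_general (sqrt_two_le_ω j) hx
end

section
/- For every j ∈ ℕ and every x ∈ [0, π/2], |∫_x^{π/2} e_j(y)·sin(y)·cos(y) dy| ≤ 2/ω_j. -/
open Real MeasureTheory

/-!
Product-to-sum formulas turn `e_j(y) sin y cos y`, up to its normalising constant, into a
combination of `sin (ω y)`, `sin ((ω + 2) y)` and `sin ((ω - 2) y)` with `ω = ω_j`. These
frequencies are odd integers, so the primitives vanish at `π / 2` and the tail integral is a
combination of three cosines at `x`. Bounding each cosine by `1` gives
`(ω ^ 2 - 1) / (ω ^ 2 - 4)`; with the normalising constant this is at most `2 / ω` as soon as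
`ω ≥ 3`, because `π > 3`.
-/

lemma integral_sin_mul_to_pi_div_two {a : ℝ} (ha : a ≠ 0) (hcos : cos (a * (π / 2)) = 0)
    (x : ℝ) :
    ∫ y in x..π / 2, sin (a * y) = cos (a * x) / a := by
  rw [intervalIntegral.integral_comp_mul_left _ ha, integral_sin, hcos, sub_zero, smul_eq_mul,
    inv_mul_eq_div]

lemma mul_sin_mul_cos_sq_sub_eq_sum_sin (w y : ℝ) :
    w * sin (w * y) * cos y ^ 2 - cos (w * y) * sin y * cos y =
      w / 2 * sin (w * y) + (w - 1) / 4 * sin ((w + 2) * y) + (w + 1) / 4 * sin ((w - 2) * y) := by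
  rw [add_mul, sub_mul, sin_add, sin_sub, sin_two_mul, cos_two_mul]
  ring

lemma integral_mul_sin_mul_cos_sq_sub {w : ℝ} (hw : w ≠ 0) (hw_add : w + 2 ≠ 0)
    (hw_sub : w - 2 ≠ 0) (hcos : cos (w * (π / 2)) = 0) (x : ℝ) :
    ∫ y in x..π / 2, (w * sin (w * y) * cos y ^ 2 - cos (w * y) * sin y * cos y) =
      w / 2 * (cos (w * x) / w) + (w - 1) / 4 * (cos ((w + 2) * x) / (w + 2)) +
        (w + 1) / 4 * (cos ((w - 2) * x) / (w - 2)) := by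
  have hcos_add : cos ((w + 2) * (π / 2)) = 0 := by
    rw [show (w + 2) * (π / 2) = w * (π / 2) + π by ring, cos_add_pi, hcos, neg_zero]
  have hcos_sub : cos ((w - 2) * (π / 2)) = 0 := by
    rw [show (w - 2) * (π / 2) = w * (π / 2) - π by ring, cos_sub_pi, hcos, neg_zero]
  have hint (c a : ℝ) : IntervalIntegrable (fun y ↦ c * sin (a * y)) volume x (π / 2) :=
    Continuous.intervalIntegrable (by fun_prop) _ _
  simp only [mul_sin_mul_cos_sq_sub_eq_sum_sin]
  rw [intervalIntegral.integral_add ((hint _ _).add (hint _ _)) (hint _ _),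
    intervalIntegral.integral_add (hint _ _) (hint _ _)]
  simp only [intervalIntegral.integral_const_mul]
  rw [integral_sin_mul_to_pi_div_two hw hcos,
    integral_sin_mul_to_pi_div_two hw_add hcos_add,
    integral_sin_mul_to_pi_div_two hw_sub hcos_sub]

lemma abs_integral_mul_sin_mul_cos_sq_sub_le {w : ℝ} (hw : 2 < w) (hcos : cos (w * (π / 2)) = 0)
    (x : ℝ) :
    |∫ y in x..π / 2, (w * sin (w * y) * cos y ^ 2 - cos (w * y) * sin y * cos y)| ≤
      (w ^ 2 - 1) / (w ^ 2 - 4) := by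
  have hterm {c a : ℝ} (hc : 0 ≤ c) (ha : 0 < a) : |c * (cos (a * x) / a)| ≤ c / a := by
    rw [abs_mul, abs_div, abs_of_nonneg hc, abs_of_pos ha, ← mul_one_div c a]
    gcongr
    exact abs_cos_le_one _
  have hw₀ : w ≠ 0 := by linarith
  have hw_add : w + 2 ≠ 0 := by linarith
  have hw_sub : w - 2 ≠ 0 := by linarith
  rw [integral_mul_sin_mul_cos_sq_sub hw₀ hw_add hw_sub hcos]
  calc
    _ ≤ w / 2 / w + (w - 1) / 4 / (w + 2) + (w + 1) / 4 / (w - 2) :=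
      (abs_add_three _ _ _).trans <| add_le_add_three (hterm (by linarith) (by linarith))
        (hterm (by linarith) (by linarith)) (hterm (by linarith) (by linarith))
    _ = (w ^ 2 - 1) / (w ^ 2 - 4) := by
      rw [show w ^ 2 - 4 = (w + 2) * (w - 2) by ring]
      field_simp
      ring

lemma three_le_ω (j : ℕ) : 3 ≤ ω j := by
  unfold ω
  linarith [(Nat.cast_nonneg j : (0 : ℝ) ≤ j)]

lemma cos_ω_mul_pi_div_two (j : ℕ) : cos (ω j * (π / 2)) = 0 :=
  cos_eq_zero_iff.mpr ⟨j + 1, by unfold ω; push_cast; ring⟩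

lemma sin_ω_mul_eq_zero (j : ℕ) {y : ℝ} (hy : sin y = 0) : sin (ω j * y) = 0 := by
  obtain ⟨n, rfl⟩ := sin_eq_zero_iff.mp hy
  exact sin_eq_zero_iff.mpr ⟨(2 * j + 3) * n, by unfold ω; push_cast; ring⟩

-- Where `sin y = 0` or `cos y = 0`, Lean gives `tan y = 0` and a junk value of `e j y`, but both
-- sides vanish there.
lemma e_mul_sin_mul_cos (j : ℕ) (y : ℝ) :
    e j y * sin y * cos y = 2 / √π * (√(ω j ^ 2 - 1))⁻¹ *
      (ω j * sin (ω j * y) * cos y ^ 2 - cos (ω j * y) * sin y * cos y) := by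
  by_cases hcos : cos y = 0
  · simp only [hcos]
    ring
  by_cases hsin : sin y = 0
  · simp only [hsin, sin_ω_mul_eq_zero j hsin]
    ring
  rw [e, tan_eq_sin_div_cos]
  generalize 2 / √π * (√(ω j ^ 2 - 1))⁻¹ = K
  field_simp

lemma two_div_sqrt_pi_mul_inv_sqrt_mul_le {w : ℝ} (hw : 3 ≤ w) :
    2 / √π * (√(w ^ 2 - 1))⁻¹ * ((w ^ 2 - 1) / (w ^ 2 - 4)) ≤ 2 / w := by
  have h_one : 0 < w ^ 2 - 1 := by nlinarith
  have h_four : 0 < w ^ 2 - 4 := by nlinarith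
  have hquad : w ^ 2 * (w ^ 2 - 1) ≤ 3 * (w ^ 2 - 4) ^ 2 := by
    have h_nine : 9 ≤ w ^ 2 := by nlinarith
    nlinarith
  have hsqrt : w * √(w ^ 2 - 1) ≤ √π * (w ^ 2 - 4) := by
    refine (sq_le_sq₀ (by positivity) (by positivity)).mp ?_
    rw [mul_pow, mul_pow, sq_sqrt h_one.le, sq_sqrt pi_pos.le]
    exact hquad.trans (by gcongr; exact pi_gt_three.le)
  calc
    _ = 2 * √(w ^ 2 - 1) / (√π * (w ^ 2 - 4)) := by
      nth_rewrite 2 [← mul_self_sqrt h_one.le]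
      field_simp
    _ ≤ 2 / w := by
      rw [div_le_div_iff₀ (by positivity) (by positivity)]
      linarith

theorem ads_eigenfunction_tail_integral_bound_general (j : ℕ) (x : ℝ) :
    |∫ y in x..π / 2, e j y * sin y * cos y| ≤ 2 / ω j := by
  have hω := three_le_ω j
  simp only [e_mul_sin_mul_cos]
  rw [intervalIntegral.integral_const_mul, abs_mul, abs_of_nonneg (by positivity)]
  calc
    _ ≤ 2 / √π * (√(ω j ^ 2 - 1))⁻¹ * ((ω j ^ 2 - 1) / (ω j ^ 2 - 4)) := by
      gcongr
      exact abs_integral_mul_sin_mul_cos_sq_sub_le (by linarith) (cos_ω_mul_pi_div_two j) x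
    _ ≤ 2 / ω j := two_div_sqrt_pi_mul_inv_sqrt_mul_le hω

/-- For every `j ∈ ℕ` and `x ∈ [0, π/2]`,
`|∫_x^{π/2} e_j(y)·sin(y)·cos(y) dy| ≤ 2/ω_j`. -/
theorem ads_eigenfunction_tail_integral_bound (j : ℕ) (x : ℝ)
    (hx : x ∈ Set.Icc 0 (Real.pi / 2)) :
    |∫ y in Set.Ioo x (Real.pi / 2), e j y * Real.sin y * Real.cos y| ≤ 2 / ω j := by
  rw [← integral_Ioc_eq_integral_Ioo, ← intervalIntegral.integral_of_le hx.2]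
  exact ads_eigenfunction_tail_integral_bound_general j x
end

section
/- For every integer a ≥ 1, ∫₀^{π/2} sin(2ax)·cos(x)/sin(x) dx = π/2. -/
/-!
The identity `(cos 2kx + cos 2(k+1)x) sin x = (sin 2(k+1)x - sin 2kx) cos x` telescopes to
`sin (2ax) cot x = ∑_{k < a} (cos 2kx + cos 2(k+1)x)`. On `[0, π/2]` every cosine of nonzero
frequency `2k` has integral zero, so only the constant term `cos 0 = 1` contributes.
-/

open Real MeasureTheory

lemma cos_sub_add_cos_add_mul_sin (x y : ℝ) :
    (cos (x - y) + cos (x + y)) * sin y = (sin (x + y) - sin (x - y)) * cos y := by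
  rw [cos_sub, cos_add, sin_add, sin_sub]
  ring

lemma sum_range_cos_add_cos_mul_sin (n : ℕ) (x : ℝ) :
    (∑ k ∈ Finset.range n, (cos (2 * k * x) + cos (2 * (k + 1) * x))) * sin x =
      sin (2 * n * x) * cos x := by
  have telescoping_term (k : ℕ) :
      (cos (2 * k * x) + cos (2 * (k + 1) * x)) * sin x =
        sin (2 * (k + 1 : ℕ) * x) * cos x - sin (2 * k * x) * cos x := by
    convert cos_sub_add_cos_add_mul_sin ((2 * k + 1) * x) x using 1
    · ring_nf
    · push_cast
      ring_nf
  simp_rw [Finset.sum_mul, telescoping_term]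
  rw [Finset.sum_range_sub fun k : ℕ ↦ sin (2 * k * x) * cos x]
  simp

lemma sin_two_mul_nat_mul_mul_cos_div_sin (n : ℕ) {x : ℝ} (hx : sin x ≠ 0) :
    sin (2 * n * x) * cos x / sin x =
      ∑ k ∈ Finset.range n, (cos (2 * k * x) + cos (2 * (k + 1) * x)) :=
  (div_eq_iff hx).mpr (sum_range_cos_add_cos_mul_sin n x).symm

lemma integral_cos_two_mul_int_mul {k : ℤ} (hk : k ≠ 0) :
    ∫ x in (0 : ℝ)..π / 2, cos (2 * k * x) = 0 := by
  have frequency_ne_zero : (2 * k : ℝ) ≠ 0 := by positivity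
  have phase_at_endpoint : 2 * (k : ℝ) * (π / 2) = k * π := by ring
  rw [intervalIntegral.integral_comp_mul_left cos frequency_ne_zero, integral_cos,
    phase_at_endpoint, sin_int_mul_pi]
  simp

lemma integral_cos_add_cos_succ (k : ℕ) :
    ∫ x in (0 : ℝ)..π / 2, (cos (2 * k * x) + cos (2 * (k + 1) * x)) =
      if k = 0 then π / 2 else 0 := by
  have integral_succ : ∫ x in (0 : ℝ)..π / 2, cos (2 * (k + 1) * x) = 0 := by
    simpa only [Int.cast_natCast, Int.cast_add, Int.cast_one] using
      integral_cos_two_mul_int_mul (k := k + 1) (by omega)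
  rw [intervalIntegral.integral_add (Continuous.intervalIntegrable (by fun_prop) _ _)
    (Continuous.intervalIntegrable (by fun_prop) _ _), integral_succ, add_zero]
  split_ifs with hk
  · simp [hk]
  · simpa only [Int.cast_natCast] using integral_cos_two_mul_int_mul (Int.natCast_ne_zero.mpr hk)

/-- For every integer `a ≥ 1`, `∫₀^{π/2} sin(2ax)·cos(x)/sin(x) dx = π/2`. -/
theorem oscillatory_integral_sin_even_over_tan (a : ℕ) (ha : 1 ≤ a) :
    (∫ x in Set.Ioo (0 : ℝ) (Real.pi / 2),
        Real.sin (2 * (a : ℝ) * x) * Real.cos x / Real.sin x) = Real.pi / 2 := by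
  have sin_ne_zero {x : ℝ} (hx : x ∈ Set.Ioo 0 (π / 2)) : sin x ≠ 0 :=
    (sin_pos_of_pos_of_lt_pi hx.1 (hx.2.trans (half_lt_self pi_pos))).ne'
  calc
    _ = ∫ x in Set.Ioo 0 (π / 2),
          ∑ k ∈ Finset.range a, (cos (2 * k * x) + cos (2 * (k + 1) * x)) :=
      setIntegral_congr_fun measurableSet_Ioo fun _ hx ↦
        sin_two_mul_nat_mul_mul_cos_div_sin a (sin_ne_zero hx)
    _ = ∫ x in (0 : ℝ)..π / 2,
          ∑ k ∈ Finset.range a, (cos (2 * k * x) + cos (2 * (k + 1) * x)) := by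
      rw [intervalIntegral.integral_of_le pi_div_two_pos.le, integral_Ioc_eq_integral_Ioo]
    _ = ∑ k ∈ Finset.range a, if k = 0 then π / 2 else 0 := by
      rw [intervalIntegral.integral_finsetSum fun _ _ ↦
        Continuous.intervalIntegrable (by fun_prop) _ _]
      simp_rw [integral_cos_add_cos_succ]
    _ = π / 2 := by
      rw [Finset.sum_ite_eq', if_pos (Finset.mem_range.mpr ha)]
end

section
/- For every integer a ≥ 3, ∫₀^{π/2} cos²(x)·sin(2ax)·cos(x)/sin(x) dx = π/2. -/
open Real MeasureTheory

/-! Where `sin x ≠ 0`, the quotient `sin (n * x) / sin x` is the Chebyshev polynomial `U (n - 1)` at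
`cos x`. The recurrence `2 * X * U (n + 1) = U (n + 2) + U n` says that absorbing a factor `cos x`
replaces `U` by the average of its two neighbours, so it suffices to know that
`∫ U (2 * j) (cos x) = π / 2`. This holds for `j = 0`, and consecutive such integrals differ by
`2 * ∫ cos (2 * (j + 1) * x) = 0`. -/

open Polynomial Polynomial.Chebyshev

lemma integral_chebyshev_T_even_cos {m : ℤ} (hm : m ≠ 0) :
    ∫ x in (0 : ℝ)..π / 2, (T ℝ (2 * m)).eval (cos x) = 0 := by
  have hm' : (2 * m : ℝ) ≠ 0 := by exact_mod_cast mul_ne_zero two_ne_zero hm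
  have hend : (2 * m : ℝ) * (π / 2) = m * π := by ring
  simp only [T_real_cos, Int.cast_mul, Int.cast_ofNat]
  rw [intervalIntegral.integral_comp_mul_left cos hm', integral_cos, hend, sin_int_mul_pi,
    mul_zero, sin_zero, sub_zero, smul_zero]

lemma integral_chebyshev_U_even_cos (j : ℕ) :
    ∫ x in (0 : ℝ)..π / 2, (U ℝ (2 * j)).eval (cos x) = π / 2 := by
  induction j with
  | zero => simp
  | succ j ih =>
    have hrec (x : ℝ) : (U ℝ (2 * (j + 1 : ℕ))).eval (cos x) =
        2 * (T ℝ (2 * (j + 1 : ℤ))).eval (cos x) + (U ℝ (2 * j)).eval (cos x) := by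
      simpa [mul_add] using congrArg (eval (cos x)) (U_eq_two_mul_T_add_U ℝ (2 * j))
    simp only [hrec]
    rw [intervalIntegral.integral_add (Continuous.intervalIntegrable (by fun_prop) _ _)
        (Continuous.intervalIntegrable (by fun_prop) _ _),
      intervalIntegral.integral_const_mul, integral_chebyshev_T_even_cos (by lia), ih,
      mul_zero, zero_add]

lemma integral_cos_pow_mul_chebyshev_U_cos (k j : ℕ) :
    ∫ x in (0 : ℝ)..π / 2, cos x ^ k * (U ℝ (k + 2 * j)).eval (cos x) = π / 2 := by
  induction k generalizing j with
  | zero => simpa using integral_chebyshev_U_even_cos j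
  | succ k ih =>
    have hrec (x : ℝ) : cos x ^ (k + 1) * (U ℝ ((k + 1 : ℕ) + 2 * j)).eval (cos x) =
        (cos x ^ k * (U ℝ (k + 2 * (j + 1 : ℕ))).eval (cos x) +
          cos x ^ k * (U ℝ (k + 2 * j)).eval (cos x)) / 2 := by
      have hmid : ((k + 1 : ℕ) + 2 * j : ℤ) = k + 2 * j + 1 := by push_cast; ring
      have htop : (k + 2 * (j + 1 : ℕ) : ℤ) = k + 2 * j + 2 := by push_cast; ring
      rw [hmid, htop, U_add_two ℝ (k + 2 * j)]
      simp only [eval_sub, eval_mul, eval_ofNat, eval_X]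
      ring
    simp only [hrec]
    rw [intervalIntegral.integral_div,
      intervalIntegral.integral_add (Continuous.intervalIntegrable (by fun_prop) _ _)
        (Continuous.intervalIntegrable (by fun_prop) _ _),
      ih (j + 1), ih j, add_self_div_two]

lemma sin_mul_div_sin_eq_chebyshev_U (n : ℤ) {x : ℝ} (hx : sin x ≠ 0) :
    sin (n * x) / sin x = (U ℝ (n - 1)).eval (cos x) := by
  rw [div_eq_iff hx, U_real_cos, Int.cast_sub, Int.cast_one, sub_add_cancel]

theorem oscillatory_integral_cos_sq_sin_even_over_tan_general {k n : ℕ} (hkn : k < n)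
    (hodd : Odd (n + k)) :
    ∫ x in Set.Ioo (0 : ℝ) (π / 2), cos x ^ k * (sin (n * x) / sin x) = π / 2 := by
  obtain ⟨j, hj⟩ : ∃ j : ℕ, (n : ℤ) - 1 = k + 2 * j := by
    obtain ⟨i, hi⟩ := hodd
    exact ⟨i - k, by lia⟩
  have hU : Set.EqOn (fun x ↦ cos x ^ k * (sin (n * x) / sin x))
      (fun x ↦ cos x ^ k * (U ℝ (k + 2 * j)).eval (cos x)) (Set.Ioo 0 (π / 2)) := by
    intro x hx
    have hsin : sin x ≠ 0 := (sin_pos_of_pos_of_lt_pi hx.1 (by linarith [hx.2, pi_pos])).ne'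
    simpa [hj] using congrArg (cos x ^ k * ·) (sin_mul_div_sin_eq_chebyshev_U n hsin)
  rw [setIntegral_congr_fun measurableSet_Ioo hU, ← integral_Ioc_eq_integral_Ioo,
    ← intervalIntegral.integral_of_le pi_div_two_pos.le, integral_cos_pow_mul_chebyshev_U_cos]

/-- For every integer `a ≥ 3`, `∫₀^{π/2} cos²(x)·sin(2ax)·cos(x)/sin(x) dx = π/2`. -/
theorem oscillatory_integral_cos_sq_sin_even_over_tan (a : ℕ) (ha : 3 ≤ a) :
    (∫ x in Set.Ioo (0 : ℝ) (Real.pi / 2),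
        Real.cos x ^ 2 * (Real.sin (2 * (a : ℝ) * x) * Real.cos x / Real.sin x)) =
      Real.pi / 2 := by
  convert oscillatory_integral_cos_sq_sin_even_over_tan_general (k := 3) (n := 2 * a)
    (by lia) ⟨a + 1, by ring⟩ using 3 with x
  push_cast
  ring
end

section
/- For every integer a ≥ 3, ∫₀^{π/2} cos³(x)·sin((2a+1)x)·cos(x)/sin(x) dx = π/2; equivalently, with e₀(x) := 4·√(2/π)·cos³(x), ∫₀^{π/2} e₀(x)·sin((2a+1)x)·cos(x)/sin(x) dx = 2·√(2π) for all integers a ≥ 3. -/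
open Real MeasureTheory

/-- The lowest AdS linearized eigenfunction `e₀(x) = 4·√(2/π)·cos³(x)`. -/
noncomputable def e₀ (x : ℝ) : ℝ := 4 * Real.sqrt (2 / Real.pi) * Real.cos x ^ 3

/-!
The quotient `sin ((2a+1)x) / sin x = U_{2a}(cos x)` is the Dirichlet kernel, whose integral over
`(0, π/2)` is `π/2`. Multiplying the integrand `cos²ⁿ x · U_{2a}(cos x)` by `cos² x = 1 - sin² x`
changes the integral by `-½ ∫ cos²ⁿ x (cos (2ax) - cos (2(a+1)x))`, which vanishes for `n < a`
because `cos²ⁿ x` is a combination of `cos (2jx)` with `j ≤ n`.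
-/

open Polynomial.Chebyshev

lemma integral_cos_two_mul_nat_mul {m : ℕ} (hm : m ≠ 0) :
    ∫ x in (0 : ℝ)..π / 2, cos (2 * m * x) = 0 := by
  have hm' : (2 * m : ℝ) ≠ 0 := by positivity
  rw [intervalIntegral.integral_comp_mul_left cos hm', integral_cos,
    show 2 * (m : ℝ) * (π / 2) = m * π by ring, sin_nat_mul_pi, mul_zero, sin_zero, sub_zero,
    smul_zero]

lemma cos_sq_mul_cos (x y : ℝ) :
    cos x ^ 2 * cos y = 1 / 2 * cos y + 1 / 4 * cos (y - 2 * x) + 1 / 4 * cos (y + 2 * x) := by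
  rw [cos_sub, cos_add, cos_sq]
  ring

lemma integral_cos_pow_mul_cos_two_mul_nat_mul {n m : ℕ} (h : n < m) :
    ∫ x in (0 : ℝ)..π / 2, cos x ^ (2 * n) * cos (2 * m * x) = 0 := by
  induction n generalizing m with
  | zero => simpa using integral_cos_two_mul_nat_mul h.ne'
  | succ n ih =>
    obtain ⟨k, rfl⟩ : ∃ k, m = k + 1 := ⟨m - 1, by lia⟩
    have hint (c : ℝ) (j : ℕ) : IntervalIntegrable
        (fun x ↦ c * (cos x ^ (2 * n) * cos (2 * j * x))) volume 0 (π / 2) :=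
      Continuous.intervalIntegrable (by fun_prop) _ _
    calc ∫ x in (0 : ℝ)..π / 2, cos x ^ (2 * (n + 1)) * cos (2 * (k + 1 : ℕ) * x)
      _ = ∫ x in (0 : ℝ)..π / 2, (1 / 2 * (cos x ^ (2 * n) * cos (2 * (k + 1 : ℕ) * x)) +
            1 / 4 * (cos x ^ (2 * n) * cos (2 * k * x)) +
            1 / 4 * (cos x ^ (2 * n) * cos (2 * (k + 2 : ℕ) * x))) := by
        congr 1 with x
        have h_cos := cos_sq_mul_cos x (2 * (k + 1 : ℕ) * x)
        rw [show 2 * ((k + 1 : ℕ) : ℝ) * x - 2 * x = 2 * k * x by push_cast; ring,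
          show 2 * ((k + 1 : ℕ) : ℝ) * x + 2 * x = 2 * (k + 2 : ℕ) * x by push_cast; ring] at h_cos
        linear_combination cos x ^ (2 * n) * h_cos
      _ = 0 := by
        rw [intervalIntegral.integral_add ((hint _ _).add (hint _ _)) (hint _ _),
          intervalIntegral.integral_add (hint _ _) (hint _ _)]
        simp only [intervalIntegral.integral_const_mul]
        rw [ih (by lia), ih (by lia), ih (by lia)]
        ring

lemma integral_eval_U_two_mul_cos (a : ℕ) :
    ∫ x in (0 : ℝ)..π / 2, (U ℝ (2 * a)).eval (cos x) = π / 2 := by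
  induction a with
  | zero => simp
  | succ a ih =>
    have hU (x : ℝ) : (U ℝ (2 * (a + 1 : ℕ))).eval (cos x) =
        2 * cos (2 * (a + 1 : ℕ) * x) + (U ℝ (2 * a)).eval (cos x) := by
      rw [show (2 * (a + 1 : ℕ) : ℤ) = 2 * a + 2 by push_cast; ring, U_eq_two_mul_T_add_U,
        Polynomial.eval_add, Polynomial.eval_mul, T_real_cos, Polynomial.eval_ofNat]
      push_cast
      ring_nf
    simp only [hU]
    rw [intervalIntegral.integral_add (Continuous.intervalIntegrable (by fun_prop) _ _)
      (Continuous.intervalIntegrable (by fun_prop) _ _), intervalIntegral.integral_const_mul,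
      integral_cos_two_mul_nat_mul a.succ_ne_zero, ih, mul_zero, zero_add]

lemma eval_U_cos_mul_sin_sq (n : ℤ) (x : ℝ) :
    (U ℝ n).eval (cos x) * sin x ^ 2 = 1 / 2 * (cos (n * x) - cos ((n + 2) * x)) := by
  rw [sq, ← mul_assoc, U_real_cos, show (n : ℝ) * x = (n + 1) * x - x by ring,
    show ((n : ℝ) + 2) * x = (n + 1) * x + x by ring, cos_sub, cos_add]
  ring

lemma integral_cos_pow_mul_eval_U_two_mul_cos {n a : ℕ} (h : n ≤ a) :
    ∫ x in (0 : ℝ)..π / 2, cos x ^ (2 * n) * (U ℝ (2 * a)).eval (cos x) = π / 2 := by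
  induction n with
  | zero => simpa using integral_eval_U_two_mul_cos a
  | succ n ih =>
    have hint (j : ℕ) : IntervalIntegrable
        (fun x ↦ cos x ^ (2 * n) * cos (2 * j * x)) volume 0 (π / 2) :=
      Continuous.intervalIntegrable (by fun_prop) _ _
    calc ∫ x in (0 : ℝ)..π / 2, cos x ^ (2 * (n + 1)) * (U ℝ (2 * a)).eval (cos x)
      _ = ∫ x in (0 : ℝ)..π / 2, (cos x ^ (2 * n) * (U ℝ (2 * a)).eval (cos x) -
            1 / 2 * (cos x ^ (2 * n) * cos (2 * a * x) -
              cos x ^ (2 * n) * cos (2 * (a + 1 : ℕ) * x))) := by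
        congr 1 with x
        have h_sin := eval_U_cos_mul_sin_sq (2 * a) x
        rw [show ((2 * a : ℤ) : ℝ) + 2 = 2 * (a + 1 : ℕ) by push_cast; ring,
          show ((2 * a : ℤ) : ℝ) = 2 * a by push_cast; rfl, sin_sq] at h_sin
        linear_combination -cos x ^ (2 * n) * h_sin
      _ = π / 2 := by
        rw [intervalIntegral.integral_sub (Continuous.intervalIntegrable (by fun_prop) _ _)
            (((hint _).sub (hint _)).const_mul _), intervalIntegral.integral_const_mul,
          intervalIntegral.integral_sub (hint _) (hint _), ih (by lia),
          integral_cos_pow_mul_cos_two_mul_nat_mul (by lia),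
          integral_cos_pow_mul_cos_two_mul_nat_mul (by lia)]
        ring

lemma integral_e₀_mul (μ : Measure ℝ) (g : ℝ → ℝ) :
    ∫ x, e₀ x * g x ∂μ = 4 * √(2 / π) * ∫ x, cos x ^ 3 * g x ∂μ := by
  simp only [e₀, mul_assoc _ (cos _ ^ 3), integral_const_mul]

lemma sqrt_two_div_pi_mul_pi : √(2 / π) * π = √(2 * π) := by
  rw [show 2 * π = 2 / π * π ^ 2 by field_simp, sqrt_mul (by positivity), sqrt_sq pi_nonneg]

theorem oscillatory_integral_cos_cubed_sin_odd_over_tan_general {n a : ℕ} (h : n < a) :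
    ∫ x in Set.Ioo (0 : ℝ) (π / 2),
      cos x ^ (2 * n + 1) * (sin ((2 * (a : ℝ) + 1) * x) * cos x / sin x) = π / 2 := by
  refine Eq.trans ?_ (integral_cos_pow_mul_eval_U_two_mul_cos (n := n + 1) h)
  rw [intervalIntegral.integral_of_le (by positivity), integral_Ioc_eq_integral_Ioo]
  refine setIntegral_congr_fun measurableSet_Ioo fun x hx ↦ ?_
  have hsin : sin x ≠ 0 :=
    (sin_pos_of_pos_of_lt_pi hx.1 (hx.2.trans (half_lt_self pi_pos))).ne'
  have hU : (U ℝ (2 * a)).eval (cos x) * sin x = sin ((2 * a + 1) * x) :=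
    mod_cast U_real_cos x (2 * a)
  simp only [← hU]
  field_simp
  ring

/-- For every integer `a ≥ 3`, `∫₀^{π/2} cos³(x)·sin((2a+1)x)·cos(x)/sin(x) dx = π/2`;
equivalently, with `e₀(x) = 4√(2/π) cos³(x)`,
`∫₀^{π/2} e₀(x)·sin((2a+1)x)·cos(x)/sin(x) dx = 2√(2π)`. -/
theorem oscillatory_integral_cos_cubed_sin_odd_over_tan (a : ℕ) (ha : 3 ≤ a) :
    (∫ x in Set.Ioo (0 : ℝ) (Real.pi / 2),
        Real.cos x ^ 3 * (Real.sin ((2 * (a : ℝ) + 1) * x) * Real.cos x / Real.sin x)) =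
      Real.pi / 2 ∧
    (∫ x in Set.Ioo (0 : ℝ) (Real.pi / 2),
        e₀ x * (Real.sin ((2 * (a : ℝ) + 1) * x) * Real.cos x / Real.sin x)) =
      2 * Real.sqrt (2 * Real.pi) := by
  have h := oscillatory_integral_cos_cubed_sin_odd_over_tan_general (n := 1) (a := a) (by lia)
  exact ⟨h, by rw [integral_e₀_mul, h, ← sqrt_two_div_pi_mul_pi]; ring⟩
end
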